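/- The number of pairs (A, B) of multi-indices A, B ∈ ℕ^6 with |A| = |B| = 5, A < B in lexicographic order, and (a₁−a₆)+(b₁−b₆) = (a₂−a₅)+(b₂−b₅) = (a₃−a₄)+(b₃−b₄) = 0, is exactly 330. -/

import Mathlib

/-!
Since `|A|` is odd, no multi-index has weight zero, so swapping `A` and `B` pairs off the solutions
with `A < B` against those with `B < A`: it suffices to count ordered pairs and halve. Subtracting
the common part `cᵢ = min(aᵢ, a₇₋ᵢ)` turns `A` into its weight `v ∈ ℤ³` and `c ∈ ℕ³`, and
`|A| = ‖v‖₁ + 2|c|`. Two multi-indices of opposite weights and equal degree thus share `‖v‖₁` and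
`k = |c|`, so the ordered pairs number `∑ₖ #{v : ‖v‖₁ = 5 - 2k} · #{c : |c| = k}²`, which is
`102 · 1² + 38 · 3² + 6 · 6² = 660`.
-/

open Finset

theorem two_mul_card_filter_lt {α β : Type*} [LinearOrder β] {f : α → β}
    (hf : Function.Injective f) (s : Finset α) (r : α → α → Prop) [DecidableRel r]
    (symm : ∀ a b, r a b → r b a) (irrefl : ∀ a ∈ s, ¬ r a a) :
    2 * #{p ∈ s ×ˢ s | f p.1 < f p.2 ∧ r p.1 p.2} = #{p ∈ s ×ˢ s | r p.1 p.2} := by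
  have card_gt : #{p ∈ s ×ˢ s | r p.1 p.2 ∧ ¬ f p.1 < f p.2} =
      #{p ∈ s ×ˢ s | r p.1 p.2 ∧ f p.1 < f p.2} := by
    refine card_equiv (Equiv.prodComm α α) fun ⟨a, b⟩ ↦ ?_
    simp only [mem_filter, mem_product, Equiv.prodComm_apply, Prod.swap_prod_mk, not_lt]
    constructor
    · rintro ⟨⟨ha, hb⟩, hab, hle⟩
      have hne : f b ≠ f a := fun h ↦ irrefl a ha (by rwa [hf h] at hab)
      exact ⟨⟨hb, ha⟩, symm a b hab, lt_of_le_of_ne hle hne⟩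
    · rintro ⟨⟨hb, ha⟩, hba, hlt⟩
      exact ⟨⟨ha, hb⟩, symm b a hba, hlt.le⟩
  rw [← card_filter_add_card_filter_not (s := {p ∈ s ×ˢ s | r p.1 p.2}) (fun p ↦ f p.1 < f p.2),
    filter_filter, filter_filter, card_gt, two_mul]
  simp only [and_comm]

section Counting

variable {ι : Type*} [Fintype ι] [DecidableEq ι]

theorem mem_piAntidiag_univ {k : ℕ} {u : ι → ℕ} : u ∈ piAntidiag univ k ↔ ∑ i, u i = k := by
  simp

theorem card_piAntidiag_univ (k : ℕ) :
    #(piAntidiag (univ : Finset ι) k) = (Fintype.card ι).multichoose k := by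
  rw [← map_sym_eq_piAntidiag, card_map, sym_univ, card_univ, Sym.card_sym_eq_multichoose]

variable (ι) in
/-- The lattice points `v : ι → ℤ` with `∑ i, |v i| = r`, enumerated by their vectors
`u` of absolute values so that the cardinality can be read off. -/
def l1Sphere (r : ℕ) : Finset (ι → ℤ) :=
  (piAntidiag univ r).biUnion fun u ↦ Fintype.piFinset fun i ↦ {(u i : ℤ), -(u i : ℤ)}

theorem mem_piFinset_pair_neg {u : ι → ℕ} {v : ι → ℤ} :
    v ∈ Fintype.piFinset (fun i ↦ {(u i : ℤ), -(u i : ℤ)}) ↔ (fun i ↦ (v i).natAbs) = u := by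
  simp [Fintype.mem_piFinset, funext_iff, Int.natAbs_eq_iff]

theorem mem_l1Sphere {r : ℕ} {v : ι → ℤ} : v ∈ l1Sphere ι r ↔ ∑ i, (v i).natAbs = r := by
  simp only [l1Sphere, mem_biUnion, mem_piFinset_pair_neg, mem_piAntidiag_univ, exists_eq_right']

theorem card_l1Sphere (r : ℕ) :
    #(l1Sphere ι r) = ∑ u ∈ piAntidiag univ r, ∏ i : ι, if u i = 0 then 1 else 2 := by
  rw [l1Sphere, card_biUnion]
  · refine sum_congr rfl fun u _ ↦ ?_
    rw [Fintype.card_piFinset]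
    refine prod_congr rfl fun i _ ↦ ?_
    split_ifs with h
    · simp [h]
    · exact card_pair (by omega)
  · intro u _ u' _ hne
    refine disjoint_left.2 fun v hv hv' ↦ hne ?_
    exact (mem_piFinset_pair_neg.1 hv).symm.trans (mem_piFinset_pair_neg.1 hv')

end Counting

section Weight

variable {m n : ℕ}

/-- The weight of the monomial with exponent vector `A` under the diagonal torus of `Sp(2m)`, whose
`i`-th coordinate pairs the `i`-th exponent with the `i`-th exponent from the end. -/
def torusWeight (A : Fin (m + m) → ℕ) (i : Fin m) : ℤ :=
  (A (Fin.castAdd m i) : ℤ) - A (Fin.natAdd m i.rev)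

/-- The exponents with which the weight-zero products `z_i z_{2m+1-i}` divide the monomial with
exponent vector `A`. -/
def commonPart (A : Fin (m + m) → ℕ) (i : Fin m) : ℕ :=
  min (A (Fin.castAdd m i)) (A (Fin.natAdd m i.rev))

/-- A multi-index is determined by its weight `v` and its common part `c`: the two exponents paired
at `i` are `(v i)⁺ + c i` and `(v i)⁻ + c i`. -/
def weightCommonPartEquiv : (Fin (m + m) → ℕ) ≃ (Fin m → ℤ) × (Fin m → ℕ) where
  toFun A := (torusWeight A, commonPart A)
  invFun x := Fin.append (fun i ↦ (x.1 i).toNat + x.2 i)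
    (fun i ↦ (-x.1 i.rev).toNat + x.2 i.rev)
  left_inv A := by
    funext j
    refine Fin.addCases (fun i ↦ ?_) (fun i ↦ ?_) j
    · simp only [Fin.append_left, torusWeight, commonPart]
      omega
    · simp only [Fin.append_right, torusWeight, commonPart, Fin.rev_rev]
      omega
  right_inv x := by
    ext i
    · simp only [torusWeight, Fin.append_left, Fin.append_right, Fin.rev_rev]
      omega
    · simp only [commonPart, Fin.append_left, Fin.append_right, Fin.rev_rev]
      omega

theorem sum_eq_sum_natAbs_torusWeight_add (A : Fin (m + m) → ℕ) :
    ∑ j, A j = ∑ i, (torusWeight A i).natAbs + 2 * ∑ i, commonPart A i := by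
  rw [Fin.sum_univ_add, ← Equiv.sum_comp Fin.revPerm fun i ↦ A (Fin.natAdd m i), mul_sum,
    ← sum_add_distrib, ← sum_add_distrib]
  refine sum_congr rfl fun i _ ↦ ?_
  simp only [torusWeight, commonPart, Fin.revPerm_apply]
  omega

theorem torusWeight_ne_zero_of_odd {A : Fin (m + m) → ℕ} (hA : Odd (∑ j, A j)) :
    torusWeight A ≠ 0 := by
  intro h
  simp [sum_eq_sum_natAbs_torusWeight_add, h, ← Nat.not_even_iff_odd] at hA

theorem card_filter_torusWeight_eq {v : Fin m → ℤ} {k : ℕ}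
    (hn : ∑ i, (v i).natAbs + 2 * k = n) :
    #{A ∈ piAntidiag univ n | torusWeight A = v} = m.multichoose k := by
  calc #{A ∈ piAntidiag univ n | torusWeight A = v}
      = #({v} ×ˢ piAntidiag (univ : Finset (Fin m)) k) := by
        refine card_equiv weightCommonPartEquiv fun A ↦ ?_
        have hdeg := sum_eq_sum_natAbs_torusWeight_add A
        simp only [mem_filter, mem_piAntidiag_univ, mem_product, mem_singleton,
          weightCommonPartEquiv, Equiv.coe_fn_mk]
        constructor
        · rintro ⟨hA, rfl⟩
          exact ⟨rfl, by omega⟩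
        · rintro ⟨rfl, hk⟩
          exact ⟨by omega, rfl⟩
    _ = m.multichoose k := by
        rw [card_product, card_singleton, one_mul, card_piAntidiag_univ, Fintype.card_fin]

theorem card_filter_sum_commonPart_eq {r k : ℕ} (hn : r + 2 * k = n) :
    #{A ∈ piAntidiag (univ : Finset (Fin (m + m))) n | ∑ i, commonPart A i = k} =
      #(l1Sphere (Fin m) r) * m.multichoose k := by
  calc #{A ∈ piAntidiag (univ : Finset (Fin (m + m))) n | ∑ i, commonPart A i = k}
      = #(l1Sphere (Fin m) r ×ˢ piAntidiag (univ : Finset (Fin m)) k) := by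
        refine card_equiv weightCommonPartEquiv fun A ↦ ?_
        have hdeg := sum_eq_sum_natAbs_torusWeight_add A
        simp only [mem_filter, mem_piAntidiag_univ, mem_product, mem_l1Sphere,
          weightCommonPartEquiv, Equiv.coe_fn_mk]
        omega
    _ = #(l1Sphere (Fin m) r) * m.multichoose k := by
        rw [card_product, card_piAntidiag_univ, Fintype.card_fin]

theorem card_filter_add_torusWeight_eq_zero {A : Fin (m + m) → ℕ}
    (hA : ∑ j, A j = n) :
    #{B ∈ piAntidiag univ n | torusWeight A + torusWeight B = 0} =
      m.multichoose (∑ i, commonPart A i) := by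
  simp only [add_eq_zero_iff_neg_eq, eq_comm (a := -torusWeight A)]
  apply card_filter_torusWeight_eq
  simp only [Pi.neg_apply, Int.natAbs_neg]
  exact (sum_eq_sum_natAbs_torusWeight_add A).symm.trans hA

theorem card_filter_torusWeight_add_torusWeight_eq_zero (m n : ℕ) :
    #{p ∈ piAntidiag (univ : Finset (Fin (m + m))) n ×ˢ piAntidiag univ n |
        torusWeight p.1 + torusWeight p.2 = 0} =
      ∑ k ∈ range (n / 2 + 1), #(l1Sphere (Fin m) (n - 2 * k)) * m.multichoose k ^ 2 := by
  have sum_commonPart_mem_range : ∀ A ∈ piAntidiag (univ : Finset (Fin (m + m))) n,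
      ∑ i, commonPart A i ∈ range (n / 2 + 1) := by
    intro A hA
    rw [mem_piAntidiag_univ] at hA
    have hdeg := sum_eq_sum_natAbs_torusWeight_add A
    rw [mem_range]
    omega
  calc
    _ = ∑ A ∈ piAntidiag (univ : Finset (Fin (m + m))) n,
          #{B ∈ piAntidiag univ n | torusWeight A + torusWeight B = 0} := by
        simp only [card_filter, sum_product]
    _ = ∑ A ∈ piAntidiag (univ : Finset (Fin (m + m))) n,
          m.multichoose (∑ i, commonPart A i) :=
        sum_congr rfl fun A hA ↦
          card_filter_add_torusWeight_eq_zero (mem_piAntidiag_univ.1 hA)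
    _ = ∑ k ∈ range (n / 2 + 1),
          ∑ A ∈ piAntidiag (univ : Finset (Fin (m + m))) n with ∑ i, commonPart A i = k,
            m.multichoose k := (sum_fiberwise_of_maps_to' sum_commonPart_mem_range _).symm
    _ = ∑ k ∈ range (n / 2 + 1), #(l1Sphere (Fin m) (n - 2 * k)) * m.multichoose k ^ 2 := by
        refine sum_congr rfl fun k hk ↦ ?_
        have hn : n - 2 * k + 2 * k = n := by
          rw [mem_range] at hk
          omega
        rw [sum_const, card_filter_sum_commonPart_eq hn, smul_eq_mul, mul_assoc, sq]

theorem weight_zero_pairs_count_general (hn : Odd n) :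
    2 * Nat.card {p : (Fin (m + m) → ℕ) × (Fin (m + m) → ℕ) //
      (∑ j, p.1 j) = n ∧ (∑ j, p.2 j) = n ∧ toLex p.1 < toLex p.2 ∧
      torusWeight p.1 + torusWeight p.2 = 0} =
    ∑ k ∈ range (n / 2 + 1), #(l1Sphere (Fin m) (n - 2 * k)) * m.multichoose k ^ 2 := by
  rw [← card_filter_torusWeight_add_torusWeight_eq_zero, ← two_mul_card_filter_lt toLex.injective _
    (fun A B : Fin (m + m) → ℕ ↦ torusWeight A + torusWeight B = 0)]
  · congr 1
    refine Nat.subtype_card _ fun p ↦ ?_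
    simp only [mem_filter, mem_product, mem_piAntidiag_univ, and_assoc]
    rfl
  · intro A B h
    rwa [add_comm]
  · intro A hA h
    rw [mem_piAntidiag_univ] at hA
    exact torusWeight_ne_zero_of_odd (hA ▸ hn) (self_eq_neg.1 (eq_neg_of_add_eq_zero_left h))

theorem torusWeight_add_torusWeight_eq_zero_iff (A B : Fin (3 + 3) → ℕ) :
    torusWeight A + torusWeight B = 0 ↔
      ((A 0 : ℤ) - A 5) + ((B 0 : ℤ) - B 5) = 0 ∧
      ((A 1 : ℤ) - A 4) + ((B 1 : ℤ) - B 4) = 0 ∧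
      ((A 2 : ℤ) - A 3) + ((B 2 : ℤ) - B 3) = 0 := by
  rw [funext_iff, Fin.forall_fin_succ, Fin.forall_fin_two]
  rfl

theorem card_l1Sphere_fin_three :
    #(l1Sphere (Fin 3) 1) = 6 ∧ #(l1Sphere (Fin 3) 3) = 38 ∧ #(l1Sphere (Fin 3) 5) = 102 := by
  simp only [card_l1Sphere, piAntidiag_univ_fin_eq_antidiagonalTuple]
  decide

theorem sum_card_l1Sphere_mul_multichoose_sq :
    ∑ k ∈ range (5 / 2 + 1), #(l1Sphere (Fin 3) (5 - 2 * k)) * Nat.multichoose 3 k ^ 2 =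
      2 * 330 := by
  obtain ⟨card_one, card_three, card_five⟩ := card_l1Sphere_fin_three
  simp [sum_range_succ, card_one, card_three, card_five, Nat.multichoose]

end Weight

/-- The number of pairs `(A,B)` of multi-indices in `ℕ⁶` with `|A| = |B| = 5`,
`A < B` lexicographically, and total torus weight zero, i.e.
`(a₁−a₆)+(b₁−b₆) = (a₂−a₅)+(b₂−b₅) = (a₃−a₄)+(b₃−b₄) = 0`, is exactly 330. -/
theorem weight_zero_pairs_count :
    Nat.card {p : (Fin 6 → ℕ) × (Fin 6 → ℕ) //
      (∑ i, p.1 i) = 5 ∧ (∑ i, p.2 i) = 5 ∧ toLex p.1 < toLex p.2 ∧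
      ((p.1 0 : ℤ) - p.1 5) + ((p.2 0 : ℤ) - p.2 5) = 0 ∧
      ((p.1 1 : ℤ) - p.1 4) + ((p.2 1 : ℤ) - p.2 4) = 0 ∧
      ((p.1 2 : ℤ) - p.1 3) + ((p.2 2 : ℤ) - p.2 3) = 0} = 330 := by
  have two_mul_count := weight_zero_pairs_count_general (m := 3) (n := 5) (by decide)
  simp only [torusWeight_add_torusWeight_eq_zero_iff] at two_mul_count
  exact Nat.eq_of_mul_eq_mul_left two_pos
    (two_mul_count.trans sum_card_l1Sphere_mul_multichoose_sq)
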